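/- Suppose the square matrix [r Q] ∈ ℝ^{(m+1)×(m+1)} is invertible and F = QᵀQ − wᵀw is positive definite. Then there exists u ∈ ℝ^m satisfying ‖Q u + r‖₂ ≤ w u + v if and only if H is not positive definite and v − w F⁻¹ (Qᵀr − wᵀv) ≥ 0. (Case 2 of Theorem 2 of the paper.) -/

import Mathlib

open Matrix

/-- The Euclidean norm of a vector in `ℝ^{m+1}`. -/
noncomputable def eucNorm {n : ℕ} (x : Fin n → ℝ) : ℝ :=
  Real.sqrt (x ⬝ᵥ x)

/-- The symmetric matrix
`H = [[rᵀr − v², rᵀQ − v w], [Qᵀr − wᵀv, QᵀQ − wᵀw]]`. -/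
noncomputable def socMatH {m : ℕ} (Q : Matrix (Fin (m + 1)) (Fin m) ℝ)
    (r : Fin (m + 1) → ℝ) (w : Fin m → ℝ) (v : ℝ) :
    Matrix (Fin 1 ⊕ Fin m) (Fin 1 ⊕ Fin m) ℝ :=
  Matrix.fromBlocks
    (Matrix.of fun _ _ => r ⬝ᵥ r - v ^ 2)
    (Matrix.of fun _ j => (Qᵀ *ᵥ r) j - v * w j)
    (Matrix.of fun i _ => (Qᵀ *ᵥ r) i - v * w i)
    (Qᵀ * Q - Matrix.vecMulVec w w)

/-!
The affine map `u ↦ (Q u + r, w u + v)` pulls the Lorentz form `x ⬝ᵥ x - s ^ 2` back to a quadratic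
function `q` with quadratic part `F`. As `F` is positive definite, `q` has a unique critical point
`u₀ = -F⁻¹ (Qᵀ r - v w)`, where it is minimal. The constraint is feasible iff `u₀` itself satisfies
it: if `u` does, with `x = Q u + r` and `s = w u + v`, put `d = u - u₀`; then `F d = Qᵀ x - s w`,
and pairing with `d` gives, by Cauchy–Schwarz,
`(‖Q d‖ - w d) (‖Q d‖ + w d) = ⟪Q d, x⟫ - s (w d) ≤ s (‖Q d‖ - w d)`,
so `‖Q d‖ ≤ s - w d = w u₀ + v`. Finally, `H` is the matrix of the homogenization of `q`, so that it
is positive definite iff `q u₀ > 0`.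
-/

open WithLp

section LorentzForm

variable {ι : Type*} [Fintype ι]

/-- The Lorentz form on `ℝ^ι × ℝ`, with time coordinate `s`; it is nonpositive on the second-order
cone `‖x‖ ≤ s`. -/
def lorentzForm (x : ι → ℝ) (s : ℝ) : ℝ :=
  x ⬝ᵥ x - s ^ 2

lemma norm_toLp_sq (x : ι → ℝ) : ‖toLp 2 x‖ ^ 2 = x ⬝ᵥ x := by
  rw [EuclideanSpace.real_norm_sq_eq]
  simp only [dotProduct, sq]

lemma eucNorm_eq_norm_toLp {n : ℕ} (x : Fin n → ℝ) : eucNorm x = ‖toLp 2 x‖ := by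
  rw [eucNorm, ← norm_toLp_sq, Real.sqrt_sq (norm_nonneg _)]

lemma dotProduct_le_norm_mul_norm (x y : ι → ℝ) : x ⬝ᵥ y ≤ ‖toLp 2 x‖ * ‖toLp 2 y‖ := by
  simpa [EuclideanSpace.inner_toLp_toLp, dotProduct_comm] using
    real_inner_le_norm (toLp 2 x) (toLp 2 y)

lemma lorentzForm_eq_norm_sq_sub_sq (x : ι → ℝ) (s : ℝ) :
    lorentzForm x s = ‖toLp 2 x‖ ^ 2 - s ^ 2 := by
  rw [lorentzForm, norm_toLp_sq]

lemma norm_toLp_le_iff (x : ι → ℝ) (s : ℝ) : ‖toLp 2 x‖ ≤ s ↔ lorentzForm x s ≤ 0 ∧ 0 ≤ s := by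
  rw [lorentzForm_eq_norm_sq_sub_sq, sub_nonpos]
  exact ⟨fun h => ⟨by gcongr, (norm_nonneg _).trans h⟩, fun h => le_of_sq_le_sq h.1 h.2⟩

lemma lorentzForm_smul (a : ℝ) (x : ι → ℝ) (s : ℝ) :
    lorentzForm (a • x) (a * s) = a ^ 2 * lorentzForm x s := by
  simp only [lorentzForm, smul_dotProduct, dotProduct_smul, smul_eq_mul]
  ring

end LorentzForm

section LorentzGram

variable {ι κ : Type*} [Fintype ι]

/-- The Gram matrix of the columns of `Q` stacked over `w`, with respect to the Lorentz form. The
matrix `F` is of this kind. -/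
def lorentzGram (Q : Matrix ι κ ℝ) (w : κ → ℝ) : Matrix κ κ ℝ :=
  Qᵀ * Q - vecMulVec w w

/-- The matrix `H`, as the Lorentz Gram matrix of `[r Q]` and `[v w]`. -/
def augmentedLorentzGram (Q : Matrix ι κ ℝ) (r : ι → ℝ) (w : κ → ℝ) (v : ℝ) :
    Matrix (Fin 1 ⊕ κ) (Fin 1 ⊕ κ) ℝ :=
  lorentzGram (fromCols (replicateCol (Fin 1) r) Q) (Sum.elim (fun _ => v) w)

lemma socMatH_eq_augmentedLorentzGram {m : ℕ} (Q : Matrix (Fin (m + 1)) (Fin m) ℝ)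
    (r : Fin (m + 1) → ℝ) (w : Fin m → ℝ) (v : ℝ) :
    socMatH Q r w v = augmentedLorentzGram Q r w v := by
  ext (i | i) (j | j) <;>
    simp [socMatH, augmentedLorentzGram, lorentzGram, mul_apply, mulVec, dotProduct,
      vecMulVec_apply, sq, mul_comm]

lemma isHermitian_lorentzGram (Q : Matrix ι κ ℝ) (w : κ → ℝ) : (lorentzGram Q w).IsHermitian := by
  ext i j
  simp [lorentzGram, mul_apply, vecMulVec_apply, mul_comm]

variable [Fintype κ]

lemma lorentzGram_mulVec (Q : Matrix ι κ ℝ) (w d : κ → ℝ) :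
    lorentzGram Q w *ᵥ d = Qᵀ *ᵥ (Q *ᵥ d) - (w ⬝ᵥ d) • w := by
  rw [lorentzGram, sub_mulVec, ← mulVec_mulVec, vecMulVec_mulVec, op_smul_eq_smul]

lemma dotProduct_transpose_mulVec_sub (Q : Matrix ι κ ℝ) (w d : κ → ℝ) (x : ι → ℝ) (s : ℝ) :
    d ⬝ᵥ (Qᵀ *ᵥ x - s • w) = (Q *ᵥ d) ⬝ᵥ x - s * (w ⬝ᵥ d) := by
  rw [dotProduct_sub, dotProduct_mulVec, vecMul_transpose, dotProduct_smul, smul_eq_mul,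
    dotProduct_comm d w]

lemma dotProduct_lorentzGram_mulVec (Q : Matrix ι κ ℝ) (w d : κ → ℝ) :
    d ⬝ᵥ (lorentzGram Q w *ᵥ d) = lorentzForm (Q *ᵥ d) (w ⬝ᵥ d) := by
  rw [lorentzGram_mulVec, dotProduct_transpose_mulVec_sub, lorentzForm, sq]

lemma dotProduct_augmentedLorentzGram_mulVec (Q : Matrix ι κ ℝ) (r : ι → ℝ) (w : κ → ℝ) (v a : ℝ)
    (y : κ → ℝ) :
    Sum.elim (fun _ => a) y ⬝ᵥ (augmentedLorentzGram Q r w v *ᵥ Sum.elim (fun _ => a) y) =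
      lorentzForm (Q *ᵥ y + a • r) (w ⬝ᵥ y + a * v) := by
  have hr : replicateCol (Fin 1) r *ᵥ (fun _ => a) = a • r := by
    ext i
    simp [mulVec, dotProduct, mul_comm]
  have hv : (fun _ : Fin 1 => v) ⬝ᵥ (fun _ => a) = a * v := by
    simp [dotProduct, mul_comm]
  rw [augmentedLorentzGram, dotProduct_lorentzGram_mulVec, fromCols_mulVec_sumElim,
    sumElim_dotProduct_sumElim, hr, hv, add_comm (a • r), add_comm (a * v)]

lemma lorentzForm_mulVec_add_of_critical {Q : Matrix ι κ ℝ} {w : κ → ℝ} {p : ι → ℝ} {t : ℝ}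
    (hcrit : Qᵀ *ᵥ p = t • w) (d : κ → ℝ) :
    lorentzForm (Q *ᵥ d + p) (w ⬝ᵥ d + t) =
      lorentzForm (Q *ᵥ d) (w ⬝ᵥ d) + lorentzForm p t := by
  have hcross : (Q *ᵥ d) ⬝ᵥ p = t * (w ⬝ᵥ d) := by
    rw [← sub_eq_zero, ← dotProduct_transpose_mulVec_sub, hcrit, sub_self, dotProduct_zero]
  simp only [lorentzForm, add_dotProduct, dotProduct_add, dotProduct_comm p, hcross]
  ring

lemma lorentzForm_mulVec_pos {Q : Matrix ι κ ℝ} {w d : κ → ℝ} (hF : (lorentzGram Q w).PosDef)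
    (hd : d ≠ 0) : 0 < lorentzForm (Q *ᵥ d) (w ⬝ᵥ d) := by
  simpa [← dotProduct_lorentzGram_mulVec] using hF.dotProduct_mulVec_pos hd

lemma lorentzForm_mulVec_nonneg {Q : Matrix ι κ ℝ} {w : κ → ℝ} (hF : (lorentzGram Q w).PosSemidef)
    (d : κ → ℝ) : 0 ≤ lorentzForm (Q *ᵥ d) (w ⬝ᵥ d) := by
  simpa [← dotProduct_lorentzGram_mulVec] using hF.dotProduct_mulVec_nonneg d

lemma norm_mulVec_le_of_lorentzGram_mulVec_eq {Q : Matrix ι κ ℝ} {w d : κ → ℝ} {x : ι → ℝ} {s : ℝ}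
    (hF : (lorentzGram Q w).PosDef) (hd : lorentzGram Q w *ᵥ d = Qᵀ *ᵥ x - s • w)
    (hx : ‖toLp 2 x‖ ≤ s) : ‖toLp 2 (Q *ᵥ d)‖ ≤ s - w ⬝ᵥ d := by
  rcases eq_or_ne d 0 with rfl | hd0
  · simpa using (norm_nonneg _).trans hx
  set a := ‖toLp 2 (Q *ᵥ d)‖
  have hgap : 0 < a - w ⬝ᵥ d := by
    have hpos := lorentzForm_mulVec_pos hF hd0
    rw [lorentzForm_eq_norm_sq_sub_sq, sub_pos] at hpos
    exact sub_pos.2 (lt_of_pow_lt_pow_left₀ 2 (norm_nonneg _) hpos)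
  have hmul : (a + w ⬝ᵥ d) * (a - w ⬝ᵥ d) ≤ s * (a - w ⬝ᵥ d) := calc
    (a + w ⬝ᵥ d) * (a - w ⬝ᵥ d) = d ⬝ᵥ (lorentzGram Q w *ᵥ d) := by
      rw [dotProduct_lorentzGram_mulVec, lorentzForm_eq_norm_sq_sub_sq, sq_sub_sq]
    _ = (Q *ᵥ d) ⬝ᵥ x - s * (w ⬝ᵥ d) := by rw [hd, dotProduct_transpose_mulVec_sub]
    _ ≤ a * ‖toLp 2 x‖ - s * (w ⬝ᵥ d) := by gcongr; exact dotProduct_le_norm_mul_norm _ _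
    _ ≤ a * s - s * (w ⬝ᵥ d) := by gcongr
    _ = s * (a - w ⬝ᵥ d) := by ring
  linarith [le_of_mul_le_mul_right hmul hgap]

end LorentzGram

section CriticalPoint

variable {ι κ : Type*} [Fintype ι] [Fintype κ] [DecidableEq κ]
  {Q : Matrix ι κ ℝ} {w : κ → ℝ}

/-- The critical point of `u ↦ lorentzForm (Q *ᵥ u + r) (w ⬝ᵥ u + v)`. It is meaningful only if
`lorentzGram Q w` is invertible, since the inverse of a singular matrix is `0`. -/
noncomputable def criticalPoint (Q : Matrix ι κ ℝ) (r : ι → ℝ) (w : κ → ℝ) (v : ℝ) : κ → ℝ :=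
  -((lorentzGram Q w)⁻¹ *ᵥ (Qᵀ *ᵥ r - v • w))

lemma lorentzGram_mulVec_sub_criticalPoint (hF : IsUnit (lorentzGram Q w)) (r : ι → ℝ) (v : ℝ)
    (u : κ → ℝ) :
    lorentzGram Q w *ᵥ (u - criticalPoint Q r w v) =
      Qᵀ *ᵥ (Q *ᵥ u + r) - (w ⬝ᵥ u + v) • w := by
  rw [criticalPoint, sub_neg_eq_add, mulVec_add, mulVec_mulVec,
    mul_nonsing_inv _ ((isUnit_iff_isUnit_det _).1 hF), one_mulVec, lorentzGram_mulVec, mulVec_add,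
    add_smul, sub_add_sub_comm]

lemma transpose_mulVec_criticalPoint (hF : IsUnit (lorentzGram Q w)) (r : ι → ℝ) (v : ℝ) :
    Qᵀ *ᵥ (Q *ᵥ criticalPoint Q r w v + r) = (w ⬝ᵥ criticalPoint Q r w v + v) • w := by
  rw [← sub_eq_zero, ← lorentzGram_mulVec_sub_criticalPoint hF, sub_self, mulVec_zero]

lemma lorentzForm_add_smul_criticalPoint (hF : IsUnit (lorentzGram Q w)) (r : ι → ℝ) (v a : ℝ)
    (d : κ → ℝ) :
    lorentzForm (Q *ᵥ (d + a • criticalPoint Q r w v) + a • r)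
        (w ⬝ᵥ (d + a • criticalPoint Q r w v) + a * v) =
      lorentzForm (Q *ᵥ d) (w ⬝ᵥ d) + a ^ 2 *
        lorentzForm (Q *ᵥ criticalPoint Q r w v + r) (w ⬝ᵥ criticalPoint Q r w v + v) := by
  set u₀ := criticalPoint Q r w v
  have hcrit : Qᵀ *ᵥ (a • (Q *ᵥ u₀ + r)) = (a * (w ⬝ᵥ u₀ + v)) • w := by
    rw [mulVec_smul, transpose_mulVec_criticalPoint hF, smul_smul]
  rw [← lorentzForm_smul, ← lorentzForm_mulVec_add_of_critical hcrit, mulVec_add, mulVec_smul,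
    dotProduct_add, dotProduct_smul, smul_eq_mul, add_assoc, add_assoc, smul_add, mul_add]

lemma lorentzForm_criticalPoint_le (hF : (lorentzGram Q w).PosDef) (r : ι → ℝ) (v : ℝ)
    (u : κ → ℝ) :
    lorentzForm (Q *ᵥ criticalPoint Q r w v + r) (w ⬝ᵥ criticalPoint Q r w v + v) ≤
      lorentzForm (Q *ᵥ u + r) (w ⬝ᵥ u + v) := by
  have hexpand := lorentzForm_add_smul_criticalPoint hF.isUnit r v 1 (u - criticalPoint Q r w v)
  simp only [one_smul, one_mul, one_pow, sub_add_cancel] at hexpand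
  rw [hexpand]
  exact le_add_of_nonneg_left (lorentzForm_mulVec_nonneg hF.posSemidef _)

lemma exists_norm_le_iff_criticalPoint (hF : (lorentzGram Q w).PosDef) (r : ι → ℝ) (v : ℝ) :
    (∃ u, ‖toLp 2 (Q *ᵥ u + r)‖ ≤ w ⬝ᵥ u + v) ↔
      ‖toLp 2 (Q *ᵥ criticalPoint Q r w v + r)‖ ≤ w ⬝ᵥ criticalPoint Q r w v + v := by
  refine ⟨fun ⟨u, hu⟩ => ?_, fun h => ⟨_, h⟩⟩
  have hnonneg : 0 ≤ w ⬝ᵥ criticalPoint Q r w v + v := calc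
    0 ≤ ‖toLp 2 (Q *ᵥ (u - criticalPoint Q r w v))‖ := norm_nonneg _
    _ ≤ w ⬝ᵥ u + v - w ⬝ᵥ (u - criticalPoint Q r w v) :=
      norm_mulVec_le_of_lorentzGram_mulVec_eq hF
        (lorentzGram_mulVec_sub_criticalPoint hF.isUnit r v u) hu
    _ = w ⬝ᵥ criticalPoint Q r w v + v := by rw [dotProduct_sub]; ring
  exact (norm_toLp_le_iff _ _).2
    ⟨(lorentzForm_criticalPoint_le hF r v u).trans ((norm_toLp_le_iff _ _).1 hu).1, hnonneg⟩

lemma posDef_augmentedLorentzGram_iff (hF : (lorentzGram Q w).PosDef) (r : ι → ℝ) (v : ℝ) :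
    (augmentedLorentzGram Q r w v).PosDef ↔
      0 < lorentzForm (Q *ᵥ criticalPoint Q r w v + r) (w ⬝ᵥ criticalPoint Q r w v + v) := by
  set u₀ := criticalPoint Q r w v
  refine ⟨fun hH => ?_, fun hpos =>
    .of_dotProduct_mulVec_pos (isHermitian_lorentzGram _ _) fun z hz => ?_⟩
  · have hne : Sum.elim (fun _ : Fin 1 => (1 : ℝ)) u₀ ≠ 0 := fun h => by
      simpa using congrFun h (Sum.inl 0)
    simpa [dotProduct_augmentedLorentzGram_mulVec] using hH.dotProduct_mulVec_pos hne
  · -- Shearing `z` along `u₀` removes the cross terms, as in a Schur complement.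
    obtain ⟨a, d, rfl⟩ : ∃ (a : ℝ) (d : κ → ℝ), z = Sum.elim (fun _ => a) (d + a • u₀) := by
      refine ⟨z (Sum.inl 0), z ∘ Sum.inr - z (Sum.inl 0) • u₀, ?_⟩
      ext (i | i)
      · rw [Subsingleton.elim i 0, Sum.elim_inl]
      · simp
    rw [star_trivial, dotProduct_augmentedLorentzGram_mulVec,
      lorentzForm_add_smul_criticalPoint hF.isUnit]
    rcases eq_or_ne a 0 with rfl | ha
    · have hd : d ≠ 0 := by
        rintro rfl
        apply hz
        ext (i | i) <;> simp
      simpa using lorentzForm_mulVec_pos hF hd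
    · exact add_pos_of_nonneg_of_pos (lorentzForm_mulVec_nonneg hF.posSemidef d)
        (mul_pos (by positivity) hpos)

end CriticalPoint

theorem case2_feasibility_general {ι κ : Type*} [Fintype ι] [Fintype κ] [DecidableEq κ]
    (Q : Matrix ι κ ℝ) (r : ι → ℝ) (w : κ → ℝ) (v : ℝ) (hF : (lorentzGram Q w).PosDef) :
    (∃ u, ‖toLp 2 (Q *ᵥ u + r)‖ ≤ w ⬝ᵥ u + v) ↔
      ¬ (augmentedLorentzGram Q r w v).PosDef ∧
        v - w ⬝ᵥ ((lorentzGram Q w)⁻¹ *ᵥ (Qᵀ *ᵥ r - v • w)) ≥ 0 := by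
  have ht : v - w ⬝ᵥ ((lorentzGram Q w)⁻¹ *ᵥ (Qᵀ *ᵥ r - v • w)) =
      w ⬝ᵥ criticalPoint Q r w v + v := by
    rw [criticalPoint, dotProduct_neg, neg_add_eq_sub]
  rw [exists_norm_le_iff_criticalPoint hF, norm_toLp_le_iff, posDef_augmentedLorentzGram_iff hF,
    not_lt, ht]

/-- Case 2 of Theorem 2: if `[r Q]` is invertible and `F = QᵀQ − wᵀw` is
positive definite, then the SOC constraint `‖Q u + r‖₂ ≤ w u + v` is feasible
iff `H` is not positive definite and `v − w F⁻¹ (Qᵀr − wᵀv) ≥ 0`. -/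
theorem case2_feasibility {m : ℕ} (hm : 0 < m)
    (Q : Matrix (Fin (m + 1)) (Fin m) ℝ) (r : Fin (m + 1) → ℝ)
    (w : Fin m → ℝ) (v : ℝ)
    (hrQ : IsUnit
      (Matrix.of (fun i => Fin.cons (r i) (Q i)) :
        Matrix (Fin (m + 1)) (Fin (m + 1)) ℝ))
    (hF : (Qᵀ * Q - Matrix.vecMulVec w w).PosDef) :
    (∃ u : Fin m → ℝ, eucNorm (Q *ᵥ u + r) ≤ w ⬝ᵥ u + v) ↔
      (¬ (socMatH Q r w v).PosDef ∧
        v - w ⬝ᵥ ((Qᵀ * Q - Matrix.vecMulVec w w)⁻¹ *ᵥ (Qᵀ *ᵥ r - v • w))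
          ≥ 0) := by
  simp only [eucNorm_eq_norm_toLp, socMatH_eq_augmentedLorentzGram]
  exact case2_feasibility_general Q r w v hF
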